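/- Let R = ℤ[√3], M = R[X]/(X³), Δ the comultiplication and ε : M → R the Frobenius trace with ε(1) = ε(x) = 0 and ε(x²) = 1. Then ε is a counit for Δ: the composite (ε ⊗ Id_M) ∘ Δ : M → R ⊗ M equals the inverse of the canonical left unitor isomorphism R ⊗ M ≅ M, and similarly (Id_M ⊗ ε) ∘ Δ equals the inverse of the right unitor; equivalently, for every a ∈ M, contracting either tensor factor of Δ(a) with ε returns a. -/

import Mathlib

open TensorProduct Polynomial

noncomputable section

/-- `R3` is the ring `ℤ[√3]`. -/
abbrev R3 : Type := Zsqrtd 3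

/-- `M3` is the quotient ring `R3[X]/(X³)`. -/
abbrev M3 : Type := Polynomial R3 ⧸ Ideal.span {(Polynomial.X : Polynomial R3) ^ 3}

/-- `x3` is the image of `X` in `M3`. -/
def x3 : M3 := Ideal.Quotient.mk _ Polynomial.X

/-! For `0 ≤ k ≤ n`, the comultiplication of the truncated polynomial algebra generated by `x` with
`x ^ (n + 1) = 0` is `Δ (x ^ k) = ∑ x ^ i ⊗ x ^ j` over `i + j = n + k`; the out-of-range terms are
zero because one of the exponents exceeds `n`. The trace picks out the coefficient of `x ^ n`, so
contracting the left factor retains only the term with `i = n`, namely `1 ⊗ x ^ k`, and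
symmetrically on the right. As the powers of `x` span the algebra, this determines both composites.
-/

section

open Finset.HasAntidiagonal (antidiagonal mem_antidiagonal)

variable {R A M N : Type*} [CommSemiring R] [Semiring A] [Algebra R A]
  [AddCommMonoid M] [Module R M] [AddCommMonoid N] [Module R N]

theorem linearMap_ext_of_adjoin_singleton_eq_top {x : A} (hgen : Algebra.adjoin R {x} = ⊤)
    {f g : A →ₗ[R] M} (h : ∀ k, f (x ^ k) = g (x ^ k)) : f = g := by
  have hspan : Submodule.span R (Submonoid.powers x : Set A) = ⊤ := by
    rw [Submonoid.powers_eq_closure, ← Algebra.adjoin_eq_span, hgen, Algebra.top_toSubmodule]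
  refine LinearMap.ext_on hspan ?_
  rintro _ ⟨k, rfl⟩
  exact h k

theorem linearMap_ext_of_pow_eq_zero {x : A} {n : ℕ} (hgen : Algebra.adjoin R {x} = ⊤)
    (hx : x ^ n = 0) {f g : A →ₗ[R] M} (h : ∀ k < n, f (x ^ k) = g (x ^ k)) : f = g := by
  refine linearMap_ext_of_adjoin_singleton_eq_top hgen fun k ↦ ?_
  rcases lt_or_ge k n with hk | hk
  · exact h k hk
  · rw [pow_eq_zero_of_le hk hx, map_zero, map_zero]

theorem map_id_right_sum_antidiagonal_tmul {ε : M →ₗ[R] R} {u : ℕ → M} {n : ℕ}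
    (hε : ∀ i, ε (u i) = if i = n then 1 else 0) (v : ℕ → N) (k : ℕ) :
    TensorProduct.map ε LinearMap.id
      (∑ p ∈ antidiagonal (n + k), u p.1 ⊗ₜ[R] v p.2) = 1 ⊗ₜ[R] v k := by
  rw [map_sum, Finset.sum_eq_single_of_mem (n, k) (mem_antidiagonal.2 rfl)]
  · rw [TensorProduct.map_tmul, hε, if_pos rfl, LinearMap.id_apply]
  · rintro ⟨i, j⟩ hij hne
    have hi : i ≠ n := by
      rintro rfl
      exact hne (Prod.ext rfl (Nat.add_left_cancel (mem_antidiagonal.1 hij)))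
    rw [TensorProduct.map_tmul, hε, if_neg hi, TensorProduct.zero_tmul]

theorem map_id_left_sum_antidiagonal_tmul {ε : M →ₗ[R] R} {u : ℕ → M} {n : ℕ}
    (hε : ∀ i, ε (u i) = if i = n then 1 else 0) (v : ℕ → N) (k : ℕ) :
    TensorProduct.map LinearMap.id ε
      (∑ p ∈ antidiagonal (n + k), v p.1 ⊗ₜ[R] u p.2) = v k ⊗ₜ[R] 1 := by
  have h := congrArg (TensorProduct.comm R R N) (map_id_right_sum_antidiagonal_tmul hε v k)
  rw [← Finset.Nat.sum_antidiagonal_swap]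
  simpa using h

theorem stmt3_general {x : A} {n : ℕ} (hgen : Algebra.adjoin R {x} = ⊤) (hx : x ^ (n + 1) = 0)
    (Δ : A →ₗ[R] A ⊗[R] A)
    (hΔ : ∀ k ≤ n, Δ (x ^ k) =
      ∑ p ∈ antidiagonal (n + k), (x ^ p.1) ⊗ₜ[R] (x ^ p.2))
    (ε : A →ₗ[R] R) (hε : ∀ k ≤ n, ε (x ^ k) = if k = n then 1 else 0) :
    TensorProduct.map ε LinearMap.id ∘ₗ Δ = (TensorProduct.lid R A).symm.toLinearMap ∧
    TensorProduct.map LinearMap.id ε ∘ₗ Δ = (TensorProduct.rid R A).symm.toLinearMap ∧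
    ∀ a : A, (TensorProduct.lid R A) (TensorProduct.map ε LinearMap.id (Δ a)) = a ∧
      (TensorProduct.rid R A) (TensorProduct.map LinearMap.id ε (Δ a)) = a := by
  have hε_pow (k : ℕ) : ε (x ^ k) = if k = n then 1 else 0 := by
    rcases le_or_gt k n with hk | hk
    · exact hε k hk
    · rw [pow_eq_zero_of_le hk hx, map_zero, if_neg hk.ne']
  have hl : TensorProduct.map ε LinearMap.id ∘ₗ Δ = (TensorProduct.lid R A).symm.toLinearMap := by
    refine linearMap_ext_of_pow_eq_zero hgen hx fun k hk ↦ ?_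
    rw [LinearMap.comp_apply, hΔ k (Nat.le_of_lt_succ hk)]
    exact map_id_right_sum_antidiagonal_tmul hε_pow (x ^ ·) k
  have hr : TensorProduct.map LinearMap.id ε ∘ₗ Δ = (TensorProduct.rid R A).symm.toLinearMap := by
    refine linearMap_ext_of_pow_eq_zero hgen hx fun k hk ↦ ?_
    rw [LinearMap.comp_apply, hΔ k (Nat.le_of_lt_succ hk)]
    exact map_id_left_sum_antidiagonal_tmul hε_pow (x ^ ·) k
  exact ⟨hl, hr, fun a ↦ ⟨(LinearEquiv.eq_symm_apply _).1 (LinearMap.congr_fun hl a),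
    (LinearEquiv.eq_symm_apply _).1 (LinearMap.congr_fun hr a)⟩⟩

end

theorem adjoin_x3_eq_top : Algebra.adjoin R3 {x3} = ⊤ :=
  AdjoinRoot.adjoinRoot_eq_top (f := (X : R3[X]) ^ 3)

theorem x3_pow_three : x3 ^ 3 = 0 :=
  Ideal.Quotient.eq_zero_iff_mem.2 (Ideal.mem_span_singleton_self _)

/-- The Frobenius trace `ε` is a counit for the comultiplication `Δ`:
`(ε ⊗ Id) ∘ Δ` is the inverse of the left unitor `R ⊗ M ≅ M`, and
`(Id ⊗ ε) ∘ Δ` is the inverse of the right unitor `M ⊗ R ≅ M`; equivalently,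
contracting either tensor factor of `Δ a` with `ε` returns `a`. -/
theorem stmt3
    (Δ : M3 →ₗ[R3] M3 ⊗[R3] M3)
    (hΔ1 : Δ 1 = 1 ⊗ₜ[R3] (x3 ^ 2) + x3 ⊗ₜ[R3] x3 + (x3 ^ 2) ⊗ₜ[R3] 1)
    (hΔx : Δ x3 = x3 ⊗ₜ[R3] (x3 ^ 2) + (x3 ^ 2) ⊗ₜ[R3] x3)
    (hΔx2 : Δ (x3 ^ 2) = (x3 ^ 2) ⊗ₜ[R3] (x3 ^ 2))
    (ε : M3 →ₗ[R3] R3)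
    (hε1 : ε 1 = 0) (hεx : ε x3 = 0) (hεx2 : ε (x3 ^ 2) = 1) :
    TensorProduct.map ε LinearMap.id ∘ₗ Δ = (TensorProduct.lid R3 M3).symm.toLinearMap ∧
    TensorProduct.map LinearMap.id ε ∘ₗ Δ = (TensorProduct.rid R3 M3).symm.toLinearMap ∧
    ∀ a : M3, (TensorProduct.lid R3 M3) (TensorProduct.map ε LinearMap.id (Δ a)) = a ∧
      (TensorProduct.rid R3 M3) (TensorProduct.map LinearMap.id ε (Δ a)) = a := by
  refine stmt3_general adjoin_x3_eq_top x3_pow_three Δ (fun k hk ↦ ?_) ε (fun k hk ↦ ?_)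
  · interval_cases k <;> simp [hΔ1, hΔx, hΔx2, Finset.Nat.antidiagonal_succ,
      pow_eq_zero_of_le _ x3_pow_three, add_assoc]
  · interval_cases k <;> simp [hε1, hεx, hεx2]
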